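/- arXiv:1512.01907 — 5 statements merged into one kernel-verified Lean document; each statement's English description precedes it below -/
import Mathlib

section
/- (Lemma 2.2, second moment) Assume P([0,1]) = 1. Then the second moment of a random variable X with distribution P satisfies E(X²) = p₂(r₂ − 1)²(−p₁r₁ + p₂r₂ + 1) / ((p₁r₁ + p₂r₂ − 1)(p₁r₁² + p₂r₂² − 1)). -/
/-!
Every continuous function is integrable against `P`, because `P` is a finite measure carried by the
compact interval `[0, 1]`. Integrating `f` against both sides of the self-similarity relation gives
`∫ f dP = p₁ ∫ f ∘ S₁ dP + p₂ ∫ f ∘ S₂ dP` (`integral_self_similar`). For `f = x` and `f = x²` this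
is a triangular linear system for the first two moments, whose determinant factors
`1 - p₁ r₁ - p₂ r₂` and `1 - p₁ r₁² - p₂ r₂²` are positive.
-/

open MeasureTheory

theorem integrable_of_continuous_of_Icc (P : Measure ℝ) [IsProbabilityMeasure P]
    (hsupp : P (Set.Icc (0 : ℝ) 1) = 1) {f : ℝ → ℝ} (hf : Continuous f) : Integrable f P := by
  have h : P.restrict (Set.Icc (0 : ℝ) 1) = P := by
    apply Measure.restrict_eq_self_of_ae_mem
    exact (prob_compl_eq_zero_iff measurableSet_Icc).2 hsupp
  rw [← h]
  exact hf.continuousOn.integrableOn_compact isCompact_Icc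

theorem integral_self_similar (p₁ p₂ : ℝ) (hp₁ : 0 < p₁) (hp₂ : 0 < p₂) (S₁ S₂ : ℝ → ℝ)
    (hS₁ : Continuous S₁) (hS₂ : Continuous S₂) (P : Measure ℝ) [IsProbabilityMeasure P]
    (hP : P = ENNReal.ofReal p₁ • P.map S₁ + ENNReal.ofReal p₂ • P.map S₂)
    (hsupp : P (Set.Icc (0 : ℝ) 1) = 1) {f : ℝ → ℝ} (hf : Continuous f) :
    ∫ x, f x ∂P = p₁ * ∫ x, f (S₁ x) ∂P + p₂ * ∫ x, f (S₂ x) ∂P := by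
  have hmap : ∀ S : ℝ → ℝ, Continuous S → Integrable f (P.map S) := fun S hS =>
    (integrable_map_measure hf.aestronglyMeasurable hS.aemeasurable).2
      (integrable_of_continuous_of_Icc P hsupp (hf.comp hS))
  calc ∫ x, f x ∂P
      = ∫ x, f x ∂(ENNReal.ofReal p₁ • P.map S₁ + ENNReal.ofReal p₂ • P.map S₂) :=
        congrArg (fun μ : Measure ℝ => ∫ x, f x ∂μ) hP
    _ = p₁ * ∫ x, f (S₁ x) ∂P + p₂ * ∫ x, f (S₂ x) ∂P := by
        rw [integral_add_measure ((hmap S₁ hS₁).smul_measure ENNReal.ofReal_ne_top)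
            ((hmap S₂ hS₂).smul_measure ENNReal.ofReal_ne_top),
          integral_smul_measure, integral_smul_measure,
          integral_map hS₁.aemeasurable hf.aestronglyMeasurable,
          integral_map hS₂.aemeasurable hf.aestronglyMeasurable,
          ENNReal.toReal_ofReal hp₁.le, ENNReal.toReal_ofReal hp₂.le, smul_eq_mul, smul_eq_mul]

theorem stmt_3 (r₁ r₂ p₁ p₂ : ℝ) (hr₁ : 0 < r₁) (hr₂ : 0 < r₂) (hr : r₁ + r₂ < 1)
    (hp₁ : 0 < p₁) (hp₂ : 0 < p₂) (hp : p₁ + p₂ = 1)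
    (S₁ S₂ : ℝ → ℝ)
    (hS₁ : S₁ = fun x => r₁ * x)
    (hS₂ : S₂ = fun x => r₂ * x + (1 - r₂))
    (P : Measure ℝ) [IsProbabilityMeasure P]
    (hP : P = ENNReal.ofReal p₁ • P.map S₁ + ENNReal.ofReal p₂ • P.map S₂)
    (hsupp : P (Set.Icc (0 : ℝ) 1) = 1) :
    ∫ x, x ^ 2 ∂P =
      p₂ * (r₂ - 1) ^ 2 * (-(p₁ * r₁) + p₂ * r₂ + 1) /
        ((p₁ * r₁ + p₂ * r₂ - 1) * (p₁ * r₁ ^ 2 + p₂ * r₂ ^ 2 - 1)) := by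
  subst hS₁ hS₂
  have i1 : Integrable (fun x : ℝ => x) P := integrable_of_continuous_of_Icc P hsupp continuous_id
  have i2 : Integrable (fun x : ℝ => x ^ 2) P :=
    integrable_of_continuous_of_Icc P hsupp (continuous_pow 2)
  have key := fun {f : ℝ → ℝ} (hf : Continuous f) =>
    integral_self_similar p₁ p₂ hp₁ hp₂ (fun x => r₁ * x) (fun x => r₂ * x + (1 - r₂))
      (by fun_prop) (by fun_prop) P hP hsupp hf
  have k1 := key (f := fun x => x) continuous_id
  have k2 := key (f := fun x => x ^ 2) (continuous_pow 2)
  have e1 : ∫ x, r₁ * x ∂P = r₁ * ∫ x, x ∂P := integral_const_mul _ _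
  have e2 : ∫ x, (r₂ * x + (1 - r₂)) ∂P = r₂ * (∫ x, x ∂P) + (1 - r₂) := by
    rw [integral_add (i1.const_mul r₂) (integrable_const _), integral_const_mul]
    simp
  have e3 : ∫ x, (r₁ * x) ^ 2 ∂P = r₁ ^ 2 * ∫ x, x ^ 2 ∂P := by
    simp_rw [mul_pow]
    exact integral_const_mul _ _
  have e4 : ∫ x, (r₂ * x + (1 - r₂)) ^ 2 ∂P =
      r₂ ^ 2 * (∫ x, x ^ 2 ∂P) + 2 * r₂ * (1 - r₂) * (∫ x, x ∂P) + (1 - r₂) ^ 2 := by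
    have h : ∀ x : ℝ, (r₂ * x + (1 - r₂)) ^ 2 =
        r₂ ^ 2 * x ^ 2 + 2 * r₂ * (1 - r₂) * x + (1 - r₂) ^ 2 := fun x => by ring
    simp_rw [h]
    rw [integral_add (integrable_of_continuous_of_Icc P hsupp (by fun_prop)) (integrable_const _),
      integral_add (i2.const_mul _) (i1.const_mul _), integral_const_mul, integral_const_mul]
    simp
  simp only [e1, e2] at k1
  simp only [e3, e4] at k2
  generalize ∫ x, x ∂P = m at k1 k2
  generalize ∫ x, x ^ 2 ∂P = M at k2 ⊢
  have hlt₁ : r₁ < 1 := by linarith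
  have hlt₂ : r₂ < 1 := by linarith
  have d1 : p₁ * r₁ + p₂ * r₂ - 1 < 0 := by
    nlinarith [mul_pos hp₁ (sub_pos.2 hlt₁), mul_pos hp₂ (sub_pos.2 hlt₂)]
  have d2 : p₁ * r₁ ^ 2 + p₂ * r₂ ^ 2 - 1 < 0 := by
    have h₁ : r₁ ^ 2 < 1 := by nlinarith
    have h₂ : r₂ ^ 2 < 1 := by nlinarith
    nlinarith [mul_pos hp₁ (sub_pos.2 h₁), mul_pos hp₂ (sub_pos.2 h₂)]
  rw [eq_div_iff (mul_ne_zero d1.ne d2.ne)]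
  -- Eliminate the mean `m` between the two moment equations.
  linear_combination (-(p₁ * r₁ + p₂ * r₂ - 1)) * k2 + (2 * p₂ * r₂ * (1 - r₂)) * k1
end

section
/- (Note 2.3, conditional expectation on a cylinder) Assume P([0,1]) = 1. Then for every word σ ∈ {1,2}^k with k ≥ 1, the conditional expectation of X given X ∈ J_σ satisfies E(X | X ∈ J_σ) = (1/P(J_σ)) ∫_{J_σ} x dP(x) = S_σ(E(X)). -/
open MeasureTheory

/-!
The self-similarity relation localises to cylinders: since the two first-level images of `[0,1]` are
disjoint and `P` lives on `[0,1]`, restricting `P` to `S_i(K)` for `K ⊆ [0,1]` kills the branch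
`j ≠ i` and leaves `p_i • (P.restrict K).map S_i` (`restrict_image_branch`). By induction on the
word, `P.restrict J_σ = p_σ • P.map S_σ` (`exists_restrict_cylinder`). Thus `P` conditioned on `J_σ`
is the law of `S_σ(X)`, and as `S_σ` is affine its mean is `S_σ(E(X))`.
-/

/-- `S_σ = S_{σ₁} ∘ S_{σ₂} ∘ ⋯ ∘ S_{σ_k}` for a word `σ ∈ {1,2}^k`. -/
def wordMap (S : Fin 2 → ℝ → ℝ) {k : ℕ} (σ : Fin k → Fin 2) : ℝ → ℝ :=
  (List.ofFn fun i => S (σ i)).foldr (· ∘ ·) id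

/-- The branch `g` contributes nothing on `f '' K` because its preimage there is `P`-null. -/
lemma restrict_image_branch (P : Measure ℝ) (f g : ℝ → ℝ) (p q : ENNReal)
    (hf : Continuous f) (hg : Continuous g) (hinj : Function.Injective f)
    (hP : P = p • P.map f + q • P.map g) {K : Set ℝ} (hK : IsCompact K)
    (h0 : P (g ⁻¹' (f '' K)) = 0) :
    P.restrict (f '' K) = p • (P.restrict K).map f := by
  have hm : MeasurableSet (f '' K) := (hK.image hf).measurableSet
  conv_lhs => rw [hP]
  rw [Measure.restrict_add, Measure.restrict_smul, Measure.restrict_smul,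
    Measure.restrict_map hf.measurable hm, Measure.restrict_map hg.measurable hm,
    hinj.preimage_image, Measure.restrict_eq_zero.mpr h0]
  simp

/-- The constant `c` is `p_σ`; only its being nonzero and finite matters. -/
lemma exists_restrict_cylinder (r₁ r₂ p₁ p₂ : ℝ) (hr₁ : 0 < r₁) (hr₂ : 0 < r₂)
    (hr : r₁ + r₂ < 1) (hp₁ : 0 < p₁) (hp₂ : 0 < p₂)
    (S : Fin 2 → ℝ → ℝ)
    (hS₁ : S 0 = fun x => r₁ * x)
    (hS₂ : S 1 = fun x => r₂ * x + (1 - r₂))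
    (P : Measure ℝ) [IsProbabilityMeasure P]
    (hP : P = ENNReal.ofReal p₁ • P.map (S 0) + ENNReal.ofReal p₂ • P.map (S 1))
    (hsupp : ∀ᵐ x ∂P, x ∈ Set.Icc (0 : ℝ) 1)
    (k : ℕ) (σ : Fin k → Fin 2) :
    ∃ (a b : ℝ) (c : ENNReal), wordMap S σ = (fun x => a * x + b) ∧
      wordMap S σ '' Set.Icc (0 : ℝ) 1 ⊆ Set.Icc (0 : ℝ) 1 ∧ c ≠ 0 ∧ c ≠ ⊤ ∧
      P.restrict (wordMap S σ '' Set.Icc (0 : ℝ) 1) = c • P.map (wordMap S σ) := by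
  induction k with
  | zero =>
    have hid : wordMap S σ = id := by simp [wordMap]
    refine ⟨1, 0, 1, ?_, ?_, one_ne_zero, ENNReal.one_ne_top, ?_⟩
    · rw [hid]; ext x; simp
    · simp [hid]
    · rw [hid, Set.image_id, Measure.map_id, one_smul, Measure.restrict_eq_self_of_ae_mem hsupp]
  | succ n ih =>
    obtain ⟨a, b, c, hw, hsub, hc0, hct, hres⟩ := ih (fun i => σ i.succ)
    have hcons : wordMap S σ = S (σ 0) ∘ wordMap S (fun i => σ i.succ) := by
      simp [wordMap, List.ofFn_succ]
    set F := wordMap S (fun i => σ i.succ) with hF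
    have hFc : Continuous F := by rw [hw]; fun_prop
    have hKc : IsCompact (F '' Set.Icc (0 : ℝ) 1) := isCompact_Icc.image hFc
    have h0c : Continuous (S 0) := by rw [hS₁]; fun_prop
    have h1c : Continuous (S 1) := by rw [hS₂]; fun_prop
    rw [hcons, Set.image_comp]
    generalize F '' Set.Icc (0 : ℝ) 1 = K at hsub hres hKc
    have hi : σ 0 = 0 ∨ σ 0 = 1 := by omega
    rcases hi with hi | hi <;> rw [hi]
    · refine ⟨r₁ * a, r₁ * b, ENNReal.ofReal p₁ * c, ?_, ?_, ?_,
        ENNReal.mul_ne_top ENNReal.ofReal_ne_top hct, ?_⟩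
      · rw [hw, hS₁]; ext x; simp only [Function.comp]; ring
      · rintro _ ⟨x, hx, rfl⟩
        have := hsub hx
        simp only [hS₁, Set.mem_Icc] at this ⊢
        constructor <;> nlinarith
      · simp [hc0, hp₁]
      · rw [restrict_image_branch P (S 0) (S 1) _ _ h0c h1c _ hP hKc, hres, Measure.map_smul,
          Measure.map_map h0c.measurable hFc.measurable, smul_smul]
        · rw [← compl_mem_ae_iff]
          filter_upwards [hsupp] with x hx
          rintro ⟨y, hy, hxy⟩
          have := hsub hy
          simp only [hS₁, hS₂, Set.mem_Icc] at this hx hxy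
          nlinarith
        · intro x y h
          simpa [hS₁, hr₁.ne'] using h
    · refine ⟨r₂ * a, r₂ * b + (1 - r₂), ENNReal.ofReal p₂ * c, ?_, ?_, ?_,
        ENNReal.mul_ne_top ENNReal.ofReal_ne_top hct, ?_⟩
      · rw [hw, hS₂]; ext x; simp only [Function.comp]; ring
      · rintro _ ⟨x, hx, rfl⟩
        have := hsub hx
        simp only [hS₂, Set.mem_Icc] at this ⊢
        constructor <;> nlinarith
      · simp [hc0, hp₂]
      · rw [add_comm] at hP
        rw [restrict_image_branch P (S 1) (S 0) _ _ h1c h0c _ hP hKc, hres, Measure.map_smul,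
          Measure.map_map h1c.measurable hFc.measurable, smul_smul]
        · rw [← compl_mem_ae_iff]
          filter_upwards [hsupp] with x hx
          rintro ⟨y, hy, hxy⟩
          have := hsub hy
          simp only [hS₁, hS₂, Set.mem_Icc] at this hx hxy
          nlinarith
        · intro x y h
          simpa [hS₂, hr₂.ne'] using h

theorem stmt_11 (r₁ r₂ p₁ p₂ : ℝ) (hr₁ : 0 < r₁) (hr₂ : 0 < r₂) (hr : r₁ + r₂ < 1)
    (hp₁ : 0 < p₁) (hp₂ : 0 < p₂) (hp : p₁ + p₂ = 1)
    (S : Fin 2 → ℝ → ℝ)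
    (hS₁ : S 0 = fun x => r₁ * x)
    (hS₂ : S 1 = fun x => r₂ * x + (1 - r₂))
    (P : Measure ℝ) [IsProbabilityMeasure P]
    (hP : P = ENNReal.ofReal p₁ • P.map (S 0) + ENNReal.ofReal p₂ • P.map (S 1))
    (hsupp : P (Set.Icc (0 : ℝ) 1) = 1)
    (k : ℕ) (hk : 1 ≤ k) (σ : Fin k → Fin 2) :
    (P (wordMap S σ '' Set.Icc (0 : ℝ) 1)).toReal⁻¹ *
        ∫ x in wordMap S σ '' Set.Icc (0 : ℝ) 1, x ∂P =
      wordMap S σ (∫ x, x ∂P) := by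
  have hae : ∀ᵐ x ∂P, x ∈ Set.Icc (0 : ℝ) 1 :=
    (mem_ae_iff_prob_eq_one measurableSet_Icc).mpr hsupp
  obtain ⟨a, b, c, hw, -, hc0, hct, hres⟩ :=
    exists_restrict_cylinder r₁ r₂ p₁ p₂ hr₁ hr₂ hr hp₁ hp₂ S hS₁ hS₂ P hP hae k σ
  have hm : Measurable (wordMap S σ) := by rw [hw]; fun_prop
  have hmass : P (wordMap S σ '' Set.Icc (0 : ℝ) 1) = c := by
    rw [← Measure.restrict_apply_univ, hres, Measure.smul_apply,
      Measure.map_apply hm MeasurableSet.univ]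
    simp
  have hint : Integrable (fun x : ℝ => x) P := by
    refine Integrable.of_bound measurable_id.aestronglyMeasurable 1 ?_
    filter_upwards [hae] with x hx
    rw [Real.norm_eq_abs, abs_le]
    constructor <;> linarith [hx.1, hx.2]
  have hmean : ∫ x, wordMap S σ x ∂P = wordMap S σ (∫ x, x ∂P) := by
    rw [hw, integral_add (hint.const_mul a) (integrable_const b), integral_const_mul]
    simp
  rw [hmass, hres, integral_smul_measure,
    integral_map (f := fun x : ℝ => x) hm.aemeasurable measurable_id.aestronglyMeasurable,
    hmean, smul_eq_mul, inv_mul_cancel_left₀ (ENNReal.toReal_ne_zero.mpr ⟨hc0, hct⟩)]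
end

section
/- (Example 4.1) Let P be the classical Cantor distribution: r₁ = r₂ = 1/3, p₁ = p₂ = 1/2, P = (1/2)·(P∘S₁⁻¹) + (1/2)·(P∘S₂⁻¹), and assume P([0,1]) = 1. Then the set α = {1/18, 5/18, 5/6} together with the cells J₁₁ = [0, 1/9], J₁₂ = [2/9, 1/3], J₂ = [2/3, 1] forms a centroidal Voronoi tessellation with three means: (i) P(J₁₁ ∪ J₁₂ ∪ J₂) = 1; (ii) the centroids satisfy (1/P(J₁₁)) ∫_{J₁₁} x dP(x) = 1/18, (1/P(J₁₂)) ∫_{J₁₂} x dP(x) = 5/18, and (1/P(J₂)) ∫_{J₂} x dP(x) = 5/6; and (iii) every x ∈ J₁₁ satisfies |x − 1/18| = min_{b ∈ α} |x − b|, every x ∈ J₁₂ satisfies |x − 5/18| = min_{b ∈ α} |x − b|, and every x ∈ J₂ satisfies |x − 5/6| = min_{b ∈ α} |x − b|. -/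
open MeasureTheory

/-!
Writing `m(a, b) = P([a, b])` and `I(a, b) = ∫_{[a, b]} x dP`, self-similarity gives the recursions
`m(a, b) = m(3a, 3b) / 2 + m(3a - 2, 3b - 2) / 2` and
`I(a, b) = I(3a, 3b) / 6 + I(3a - 2, 3b - 2) / 6 + m(3a - 2, 3b - 2) / 3`
(`cantor_measure_rec`, `cantor_integral_rec`). As `P` lives on `[0, 1]`, both quantities vanish on
intervals missing `[0, 1]`, and on intervals containing it they equal `1` and the mean of `P`.
The recursion on `[0, 1]` makes the mean `1/2`, and two further steps give the masses
`1/4, 1/4, 1/2` and the first moments of the three cells. The Voronoi inequalities are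
elementary.
-/

theorem preimage_div_Icc (a b : ℝ) :
    (fun x : ℝ => x / 3) ⁻¹' Set.Icc a b = Set.Icc (3 * a) (3 * b) := by
  ext x
  simp only [Set.mem_preimage, Set.mem_Icc]
  constructor <;> rintro ⟨h1, h2⟩ <;> constructor <;> linarith

theorem preimage_div_add_Icc (a b : ℝ) :
    (fun x : ℝ => x / 3 + 2 / 3) ⁻¹' Set.Icc a b = Set.Icc (3 * a - 2) (3 * b - 2) := by
  ext x
  simp only [Set.mem_preimage, Set.mem_Icc]
  constructor <;> rintro ⟨h1, h2⟩ <;> constructor <;> linarith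

theorem cantor_measure_rec (P : Measure ℝ) [IsProbabilityMeasure P]
    (hP : P = (2⁻¹ : ENNReal) • P.map (fun x : ℝ => x / 3) +
              (2⁻¹ : ENNReal) • P.map (fun x : ℝ => x / 3 + 2 / 3)) (a b : ℝ) :
    P.real (Set.Icc a b) =
      P.real (Set.Icc (3 * a) (3 * b)) / 2 + P.real (Set.Icc (3 * a - 2) (3 * b - 2)) / 2 := by
  have h : P (Set.Icc a b) = 2⁻¹ * P (Set.Icc (3 * a) (3 * b)) +
      2⁻¹ * P (Set.Icc (3 * a - 2) (3 * b - 2)) := by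
    conv_lhs => rw [hP]
    rw [Measure.add_apply, Measure.smul_apply, Measure.smul_apply,
      Measure.map_apply (by fun_prop) measurableSet_Icc,
      Measure.map_apply (by fun_prop) measurableSet_Icc,
      preimage_div_Icc, preimage_div_add_Icc, smul_eq_mul, smul_eq_mul]
  rw [measureReal_def, h, ENNReal.toReal_add (by finiteness) (by finiteness)]
  simp only [ENNReal.toReal_mul, ENNReal.toReal_inv, ENNReal.toReal_ofNat, measureReal_def]
  ring

theorem cantor_integral_rec (P : Measure ℝ) [IsProbabilityMeasure P]
    (hP : P = (2⁻¹ : ENNReal) • P.map (fun x : ℝ => x / 3) +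
              (2⁻¹ : ENNReal) • P.map (fun x : ℝ => x / 3 + 2 / 3))
    (hint : Integrable (fun x : ℝ => x) P) (a b : ℝ) :
    ∫ x in Set.Icc a b, x ∂P =
      (∫ x in Set.Icc (3 * a) (3 * b), x ∂P) / 6 +
      (∫ x in Set.Icc (3 * a - 2) (3 * b - 2), x ∂P) / 6 +
      P.real (Set.Icc (3 * a - 2) (3 * b - 2)) / 3 := by
  have i1 : Integrable (fun x : ℝ => x) (P.map (fun x : ℝ => x / 3)) := by
    rw [integrable_map_measure (by fun_prop) (by fun_prop)]
    exact hint.div_const 3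
  have i2 : Integrable (fun x : ℝ => x) (P.map (fun x : ℝ => x / 3 + 2 / 3)) := by
    rw [integrable_map_measure (by fun_prop) (by fun_prop)]
    exact (hint.div_const 3).add (integrable_const _)
  conv_lhs => rw [hP]
  rw [Measure.restrict_add, Measure.restrict_smul, Measure.restrict_smul,
    integral_add_measure (i1.restrict.smul_measure (by simp)) (i2.restrict.smul_measure (by simp)),
    integral_smul_measure, integral_smul_measure,
    setIntegral_map measurableSet_Icc (by fun_prop) (by fun_prop),
    setIntegral_map measurableSet_Icc (by fun_prop) (by fun_prop),
    preimage_div_Icc, preimage_div_add_Icc,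
    integral_add (hint.restrict.div_const 3) (integrable_const _),
    integral_div, integral_div]
  simp only [ENNReal.toReal_inv, ENNReal.toReal_ofNat, smul_eq_mul, integral_const,
    measureReal_restrict_apply MeasurableSet.univ, Set.univ_inter]
  ring

theorem stmt_16 (P : Measure ℝ) [IsProbabilityMeasure P]
    (hP : P = (2⁻¹ : ENNReal) • P.map (fun x : ℝ => x / 3) +
              (2⁻¹ : ENNReal) • P.map (fun x : ℝ => x / 3 + 2 / 3))
    (hsupp : P (Set.Icc (0 : ℝ) 1) = 1) :
    P (Set.Icc (0 : ℝ) (1 / 9) ∪ Set.Icc (2 / 9) (1 / 3) ∪ Set.Icc (2 / 3) 1) = 1 ∧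
    (P (Set.Icc (0 : ℝ) (1 / 9))).toReal⁻¹ *
        (∫ x in Set.Icc (0 : ℝ) (1 / 9), x ∂P) = 1 / 18 ∧
    (P (Set.Icc (2 / 9 : ℝ) (1 / 3))).toReal⁻¹ *
        (∫ x in Set.Icc (2 / 9 : ℝ) (1 / 3), x ∂P) = 5 / 18 ∧
    (P (Set.Icc (2 / 3 : ℝ) 1)).toReal⁻¹ *
        (∫ x in Set.Icc (2 / 3 : ℝ) 1, x ∂P) = 5 / 6 ∧
    (∀ x ∈ Set.Icc (0 : ℝ) (1 / 9),
      IsLeast ((fun b => |x - b|) '' ({1 / 18, 5 / 18, 5 / 6} : Set ℝ)) |x - 1 / 18|) ∧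
    (∀ x ∈ Set.Icc (2 / 9 : ℝ) (1 / 3),
      IsLeast ((fun b => |x - b|) '' ({1 / 18, 5 / 18, 5 / 6} : Set ℝ)) |x - 5 / 18|) ∧
    (∀ x ∈ Set.Icc (2 / 3 : ℝ) 1,
      IsLeast ((fun b => |x - b|) '' ({1 / 18, 5 / 18, 5 / 6} : Set ℝ)) |x - 5 / 6|) := by
  have hae : ∀ᵐ x ∂P, x ∈ Set.Icc (0 : ℝ) 1 :=
    (mem_ae_iff_prob_eq_one measurableSet_Icc).2 hsupp
  have hint : Integrable (fun x : ℝ => x) P := by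
    refine Integrable.of_bound (by fun_prop) 1 ?_
    filter_upwards [hae] with x hx
    rw [Real.norm_eq_abs, abs_le]
    constructor <;> linarith [hx.1, hx.2]
  -- Intervals missing `[0, 1]` are null, intervals containing `[0, 1]` are conull.
  have hnull : ∀ a b : ℝ, b < 0 ∨ 1 < a → Set.Icc a b =ᵐ[P] (∅ : Set ℝ) := by
    intro a b hab
    rw [ae_eq_empty]
    refine measure_mono_null (fun x hx => ?_) (ae_iff.1 hae)
    rintro ⟨h0, h1⟩
    rcases hab with h | h <;> linarith [hx.1, hx.2]
  have hfull : ∀ a b : ℝ, a ≤ 0 → 1 ≤ b → Set.Icc a b =ᵐ[P] Set.Icc (0 : ℝ) 1 := by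
    intro a b ha hb
    filter_upwards [hae] with x hx
    exact propext ⟨fun _ => hx, fun _ => ⟨ha.trans hx.1, hx.2.trans hb⟩⟩
  have m0 : ∀ a b : ℝ, b < 0 ∨ 1 < a → P.real (Set.Icc a b) = 0 := fun a b h => by
    rw [measureReal_congr (hnull a b h), measureReal_empty]
  have I0 : ∀ a b : ℝ, b < 0 ∨ 1 < a → ∫ x in Set.Icc a b, x ∂P = 0 := fun a b h => by
    rw [setIntegral_congr_set (hnull a b h), setIntegral_empty]
  have m1 : ∀ a b : ℝ, a ≤ 0 → 1 ≤ b → P.real (Set.Icc a b) = 1 := fun a b ha hb => by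
    rw [measureReal_congr (hfull a b ha hb), measureReal_def, hsupp, ENNReal.toReal_one]
  have hmean : ∫ x in Set.Icc (0 : ℝ) 1, x ∂P = 1 / 2 := by
    have h := cantor_integral_rec P hP hint 0 1
    rw [setIntegral_congr_set (hfull (3 * 0) (3 * 1) (by norm_num) (by norm_num)),
      setIntegral_congr_set (hfull (3 * 0 - 2) (3 * 1 - 2) (by norm_num) (by norm_num)),
      m1 _ _ (by norm_num) (by norm_num)] at h
    linarith
  have I1 : ∀ a b : ℝ, a ≤ 0 → 1 ≤ b → ∫ x in Set.Icc a b, x ∂P = 1 / 2 := fun a b ha hb => by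
    rw [setIntegral_congr_set (hfull a b ha hb), hmean]
  have mJ1 : P.real (Set.Icc (0 : ℝ) (1 / 3)) = 1 / 2 := by
    rw [cantor_measure_rec P hP, m1 _ _ (by norm_num) (by norm_num), m0 _ _ (by norm_num)]
    norm_num
  have IJ1 : ∫ x in Set.Icc (0 : ℝ) (1 / 3), x ∂P = 1 / 12 := by
    rw [cantor_integral_rec P hP hint, I1 _ _ (by norm_num) (by norm_num), I0 _ _ (by norm_num),
      m0 _ _ (by norm_num)]
    norm_num
  have mJ2 : P.real (Set.Icc (2 / 3 : ℝ) 1) = 1 / 2 := by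
    rw [cantor_measure_rec P hP, m0 _ _ (by norm_num), m1 _ _ (by norm_num) (by norm_num)]
    norm_num
  have IJ2 : ∫ x in Set.Icc (2 / 3 : ℝ) 1, x ∂P = 5 / 12 := by
    rw [cantor_integral_rec P hP hint, I0 _ _ (by norm_num), I1 _ _ (by norm_num) (by norm_num),
      m1 _ _ (by norm_num) (by norm_num)]
    norm_num
  have e11 : Set.Icc (3 * 0 : ℝ) (3 * (1 / 9)) = Set.Icc 0 (1 / 3) := by norm_num
  have e12 : Set.Icc (3 * (2 / 9) : ℝ) (3 * (1 / 3)) = Set.Icc (2 / 3) 1 := by norm_num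
  have mJ11 : P.real (Set.Icc (0 : ℝ) (1 / 9)) = 1 / 4 := by
    rw [cantor_measure_rec P hP, e11, mJ1, m0 _ _ (by norm_num)]
    norm_num
  have IJ11 : ∫ x in Set.Icc (0 : ℝ) (1 / 9), x ∂P = 1 / 72 := by
    rw [cantor_integral_rec P hP hint, e11, IJ1, I0 _ _ (by norm_num), m0 _ _ (by norm_num)]
    norm_num
  have mJ12 : P.real (Set.Icc (2 / 9 : ℝ) (1 / 3)) = 1 / 4 := by
    rw [cantor_measure_rec P hP, e12, mJ2, m0 _ _ (by norm_num)]
    norm_num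
  have IJ12 : ∫ x in Set.Icc (2 / 9 : ℝ) (1 / 3), x ∂P = 5 / 72 := by
    rw [cantor_integral_rec P hP hint, e12, IJ2, I0 _ _ (by norm_num), m0 _ _ (by norm_num)]
    norm_num
  refine ⟨?_, ?_, ?_, ?_, ?_, ?_, ?_⟩
  · have d1 : Disjoint (Set.Icc (0 : ℝ) (1 / 9)) (Set.Icc (2 / 9) (1 / 3)) :=
      Set.disjoint_left.2 fun x hx hy => by linarith [hx.2, hy.1]
    have d2 : Disjoint (Set.Icc (0 : ℝ) (1 / 9) ∪ Set.Icc (2 / 9) (1 / 3))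
        (Set.Icc (2 / 3) 1) :=
      Set.disjoint_left.2 fun x hx hy => by
        rcases hx with hx | hx <;> linarith [hx.2, hy.1]
    rw [← ENNReal.toReal_eq_one_iff, ← measureReal_def,
      measureReal_union d2 measurableSet_Icc, measureReal_union d1 measurableSet_Icc,
      mJ11, mJ12, mJ2]
    norm_num
  · rw [← measureReal_def, mJ11, IJ11]
    norm_num
  · rw [← measureReal_def, mJ12, IJ12]
    norm_num
  · rw [← measureReal_def, mJ2, IJ2]
    norm_num
  · rintro x ⟨hx0, hx1⟩
    refine ⟨⟨_, by simp, rfl⟩, ?_⟩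
    rintro _ ⟨b, hb, rfl⟩
    simp only [Set.mem_insert_iff, Set.mem_singleton_iff] at hb
    rcases hb with rfl | rfl | rfl <;> dsimp only <;> grind
  · rintro x ⟨hx0, hx1⟩
    refine ⟨⟨_, by simp, rfl⟩, ?_⟩
    rintro _ ⟨b, hb, rfl⟩
    simp only [Set.mem_insert_iff, Set.mem_singleton_iff] at hb
    rcases hb with rfl | rfl | rfl <;> dsimp only <;> grind
  · rintro x ⟨hx0, hx1⟩
    refine ⟨⟨_, by simp, rfl⟩, ?_⟩
    rintro _ ⟨b, hb, rfl⟩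
    simp only [Set.mem_insert_iff, Set.mem_singleton_iff] at hb
    rcases hb with rfl | rfl | rfl <;> dsimp only <;> grind
end

section
/- (Example 4.1, second CVT) Let P be the classical Cantor distribution: r₁ = r₂ = 1/3, p₁ = p₂ = 1/2, P = (1/2)·(P∘S₁⁻¹) + (1/2)·(P∘S₂⁻¹), and assume P([0,1]) = 1. Then the set α = {1/6, 13/18, 17/18} together with the cells J₁ = [0, 1/3], J₂₁ = [2/3, 7/9], J₂₂ = [8/9, 1] forms a centroidal Voronoi tessellation with three means: (i) P(J₁ ∪ J₂₁ ∪ J₂₂) = 1; (ii) the centroids satisfy (1/P(J₁)) ∫_{J₁} x dP(x) = 1/6, (1/P(J₂₁)) ∫_{J₂₁} x dP(x) = 13/18, and (1/P(J₂₂)) ∫_{J₂₂} x dP(x) = 17/18; and (iii) every x ∈ J₁ satisfies |x − 1/6| = min_{b ∈ α} |x − b|, every x ∈ J₂₁ satisfies |x − 13/18| = min_{b ∈ α} |x − b|, and every x ∈ J₂₂ satisfies |x − 17/18| = min_{b ∈ α} |x − b|. -/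
open MeasureTheory

/-!
Since `P` lives on `[0, 1]`, the image of `P` under one of the two contractions gives no mass to
the range of the other, so the self-similarity equation localises: `P` restricted to
`S_i([a, b])`, for `[a, b] ⊆ [0, 1]`, is half the image under `S_i` of `P` restricted to `[a, b]`
(`restrict_left`, `restrict_right`). Hence mass and first moment of `S_i([a, b])` are explicit
affine functions of those of `[a, b]` (`measure_left`, `moment_left` and their right-hand versions).
Integrating the identity function against the self-similarity equation gives the mean
`m = m / 3 + 1 / 3`, that is `m = 1 / 2`. Applying the recursion once for `J₁` and twice for
`J₂₁`, `J₂₂` yields the masses `1/2, 1/4, 1/4` and the claimed centroids. The Voronoi property is an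
elementary inequality between absolute values.
-/

section Cantor

variable {P : Measure ℝ} [IsProbabilityMeasure P]

lemma null_of_disjoint (hsupp : P (Set.Icc (0 : ℝ) 1) = 1) {s : Set ℝ}
    (hs : s ⊆ (Set.Icc (0 : ℝ) 1)ᶜ) : P s = 0 :=
  measure_mono_null hs ((prob_compl_eq_zero_iff measurableSet_Icc).2 hsupp)

lemma integrable_id_restrict (a b : ℝ) : Integrable (fun x : ℝ => x) (P.restrict (Set.Icc a b)) :=
  continuous_id.continuousOn.integrableOn_compact isCompact_Icc

lemma restrict_left
    (hP : P = (2⁻¹ : ENNReal) • P.map (fun x : ℝ => x / 3) +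
              (2⁻¹ : ENNReal) • P.map (fun x : ℝ => x / 3 + 2 / 3))
    (hsupp : P (Set.Icc (0 : ℝ) 1) = 1) {a b : ℝ} (hb : b ≤ 1) :
    P.restrict (Set.Icc (a / 3) (b / 3)) =
      (2⁻¹ : ENNReal) • (P.restrict (Set.Icc a b)).map (fun x : ℝ => x / 3) := by
  have h1 : (fun x : ℝ => x / 3) ⁻¹' Set.Icc (a / 3) (b / 3) = Set.Icc a b := by
    ext x
    simp only [Set.mem_preimage, Set.mem_Icc]
    constructor <;> rintro ⟨h, h'⟩ <;> constructor <;> linarith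
  have h2 : P ((fun x : ℝ => x / 3 + 2 / 3) ⁻¹' Set.Icc (a / 3) (b / 3)) = 0 := by
    refine null_of_disjoint hsupp ?_
    rintro x ⟨-, h⟩ ⟨h0, -⟩
    simp only at h
    linarith
  conv_lhs => rw [hP]
  rw [Measure.restrict_add, Measure.restrict_smul, Measure.restrict_smul,
    Measure.restrict_map (by fun_prop) measurableSet_Icc,
    Measure.restrict_map (by fun_prop) measurableSet_Icc, h1, Measure.restrict_eq_zero.2 h2]
  simp

lemma restrict_right
    (hP : P = (2⁻¹ : ENNReal) • P.map (fun x : ℝ => x / 3) +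
              (2⁻¹ : ENNReal) • P.map (fun x : ℝ => x / 3 + 2 / 3))
    (hsupp : P (Set.Icc (0 : ℝ) 1) = 1) {a b : ℝ} (ha : 0 ≤ a) :
    P.restrict (Set.Icc (a / 3 + 2 / 3) (b / 3 + 2 / 3)) =
      (2⁻¹ : ENNReal) • (P.restrict (Set.Icc a b)).map (fun x : ℝ => x / 3 + 2 / 3) := by
  have h1 : (fun x : ℝ => x / 3 + 2 / 3) ⁻¹' Set.Icc (a / 3 + 2 / 3) (b / 3 + 2 / 3) =
      Set.Icc a b := by
    ext x
    simp only [Set.mem_preimage, Set.mem_Icc]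
    constructor <;> rintro ⟨h, h'⟩ <;> constructor <;> linarith
  have h2 : P ((fun x : ℝ => x / 3) ⁻¹' Set.Icc (a / 3 + 2 / 3) (b / 3 + 2 / 3)) = 0 := by
    refine null_of_disjoint hsupp ?_
    rintro x ⟨h, -⟩ ⟨-, h0⟩
    simp only at h
    linarith
  conv_lhs => rw [hP]
  rw [Measure.restrict_add, Measure.restrict_smul, Measure.restrict_smul,
    Measure.restrict_map (by fun_prop) measurableSet_Icc,
    Measure.restrict_map (by fun_prop) measurableSet_Icc, h1, Measure.restrict_eq_zero.2 h2]
  simp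

lemma measure_left
    (hP : P = (2⁻¹ : ENNReal) • P.map (fun x : ℝ => x / 3) +
              (2⁻¹ : ENNReal) • P.map (fun x : ℝ => x / 3 + 2 / 3))
    (hsupp : P (Set.Icc (0 : ℝ) 1) = 1) {a b : ℝ} (hb : b ≤ 1) :
    P (Set.Icc (a / 3) (b / 3)) = 2⁻¹ * P (Set.Icc a b) := by
  rw [← Measure.restrict_apply_univ, restrict_left hP hsupp hb, Measure.smul_apply,
    Measure.map_apply (by fun_prop) MeasurableSet.univ]
  simp

lemma measure_right
    (hP : P = (2⁻¹ : ENNReal) • P.map (fun x : ℝ => x / 3) +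
              (2⁻¹ : ENNReal) • P.map (fun x : ℝ => x / 3 + 2 / 3))
    (hsupp : P (Set.Icc (0 : ℝ) 1) = 1) {a b : ℝ} (ha : 0 ≤ a) :
    P (Set.Icc (a / 3 + 2 / 3) (b / 3 + 2 / 3)) = 2⁻¹ * P (Set.Icc a b) := by
  rw [← Measure.restrict_apply_univ, restrict_right hP hsupp ha, Measure.smul_apply,
    Measure.map_apply (by fun_prop) MeasurableSet.univ]
  simp

lemma moment_left
    (hP : P = (2⁻¹ : ENNReal) • P.map (fun x : ℝ => x / 3) +
              (2⁻¹ : ENNReal) • P.map (fun x : ℝ => x / 3 + 2 / 3))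
    (hsupp : P (Set.Icc (0 : ℝ) 1) = 1) {a b : ℝ} (hb : b ≤ 1) :
    ∫ x in Set.Icc (a / 3) (b / 3), x ∂P = (∫ x in Set.Icc a b, x ∂P) / 6 := by
  rw [restrict_left hP hsupp hb, integral_smul_measure,
    integral_map (by fun_prop) (by fun_prop), integral_div]
  simp
  ring

lemma moment_right
    (hP : P = (2⁻¹ : ENNReal) • P.map (fun x : ℝ => x / 3) +
              (2⁻¹ : ENNReal) • P.map (fun x : ℝ => x / 3 + 2 / 3))
    (hsupp : P (Set.Icc (0 : ℝ) 1) = 1) {a b : ℝ} (ha : 0 ≤ a) :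
    ∫ x in Set.Icc (a / 3 + 2 / 3) (b / 3 + 2 / 3), x ∂P =
      (∫ x in Set.Icc a b, x ∂P) / 6 + (P (Set.Icc a b)).toReal / 3 := by
  rw [restrict_right hP hsupp ha, integral_smul_measure,
    integral_map (by fun_prop) (by fun_prop),
    integral_add ((integrable_id_restrict a b).div_const 3) (integrable_const _), integral_div]
  simp [Measure.real]
  ring

lemma restrict_unit (hsupp : P (Set.Icc (0 : ℝ) 1) = 1) : P.restrict (Set.Icc (0 : ℝ) 1) = P :=
  Measure.restrict_eq_self_of_ae_mem
    ((prob_compl_eq_zero_iff measurableSet_Icc).2 hsupp)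

lemma mean_eq
    (hP : P = (2⁻¹ : ENNReal) • P.map (fun x : ℝ => x / 3) +
              (2⁻¹ : ENNReal) • P.map (fun x : ℝ => x / 3 + 2 / 3))
    (hsupp : P (Set.Icc (0 : ℝ) 1) = 1) : ∫ x in Set.Icc (0 : ℝ) 1, x ∂P = 1 / 2 := by
  have hint : Integrable (fun x : ℝ => x) P := by
    simpa only [restrict_unit hsupp] using integrable_id_restrict (P := P) 0 1
  rw [restrict_unit hsupp]
  have i1 : Integrable (fun x : ℝ => x) (P.map (fun x : ℝ => x / 3)) :=
    (integrable_map_measure (by fun_prop) (by fun_prop)).2 (hint.div_const 3)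
  have i2 : Integrable (fun x : ℝ => x) (P.map (fun x : ℝ => x / 3 + 2 / 3)) :=
    (integrable_map_measure (by fun_prop) (by fun_prop)).2
      ((hint.div_const 3).add (integrable_const _))
  have key : ∫ x, x ∂P = 2⁻¹ * ((∫ x, x ∂P) / 3) + 2⁻¹ * ((∫ x, x ∂P) / 3 + 2 / 3) := by
    conv_lhs => rw [hP]
    rw [integral_add_measure (i1.smul_measure (by simp)) (i2.smul_measure (by simp)),
      integral_smul_measure, integral_smul_measure, integral_map (by fun_prop) (by fun_prop),
      integral_map (by fun_prop) (by fun_prop),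
      integral_add (hint.div_const 3) (integrable_const _), integral_div]
    simp
  linarith

end Cantor

theorem stmt_17 (P : Measure ℝ) [IsProbabilityMeasure P]
    (hP : P = (2⁻¹ : ENNReal) • P.map (fun x : ℝ => x / 3) +
              (2⁻¹ : ENNReal) • P.map (fun x : ℝ => x / 3 + 2 / 3))
    (hsupp : P (Set.Icc (0 : ℝ) 1) = 1) :
    P (Set.Icc (0 : ℝ) (1 / 3) ∪ Set.Icc (2 / 3) (7 / 9) ∪ Set.Icc (8 / 9) 1) = 1 ∧
    (P (Set.Icc (0 : ℝ) (1 / 3))).toReal⁻¹ *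
        (∫ x in Set.Icc (0 : ℝ) (1 / 3), x ∂P) = 1 / 6 ∧
    (P (Set.Icc (2 / 3 : ℝ) (7 / 9))).toReal⁻¹ *
        (∫ x in Set.Icc (2 / 3 : ℝ) (7 / 9), x ∂P) = 13 / 18 ∧
    (P (Set.Icc (8 / 9 : ℝ) 1)).toReal⁻¹ *
        (∫ x in Set.Icc (8 / 9 : ℝ) 1, x ∂P) = 17 / 18 ∧
    (∀ x ∈ Set.Icc (0 : ℝ) (1 / 3),
      IsLeast ((fun b => |x - b|) '' ({1 / 6, 13 / 18, 17 / 18} : Set ℝ)) |x - 1 / 6|) ∧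
    (∀ x ∈ Set.Icc (2 / 3 : ℝ) (7 / 9),
      IsLeast ((fun b => |x - b|) '' ({1 / 6, 13 / 18, 17 / 18} : Set ℝ)) |x - 13 / 18|) ∧
    (∀ x ∈ Set.Icc (8 / 9 : ℝ) 1,
      IsLeast ((fun b => |x - b|) '' ({1 / 6, 13 / 18, 17 / 18} : Set ℝ)) |x - 17 / 18|) := by
  have hm := mean_eq hP hsupp
  have a1 : P (Set.Icc (0 : ℝ) (1 / 3)) = 2⁻¹ := by
    simpa [hsupp] using measure_left hP hsupp (a := 0) (b := 1) le_rfl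
  have b1 : ∫ x in Set.Icc (0 : ℝ) (1 / 3), x ∂P = 1 / 12 := by
    have h := moment_left hP hsupp (a := 0) (b := 1) le_rfl
    rw [hm, zero_div] at h
    rw [h]; norm_num
  have a2 : P (Set.Icc (2 / 3 : ℝ) 1) = 2⁻¹ := by
    have h := measure_right hP hsupp (a := 0) (b := 1) le_rfl
    rw [hsupp] at h
    norm_num at h
    exact h
  have b2 : ∫ x in Set.Icc (2 / 3 : ℝ) 1, x ∂P = 5 / 12 := by
    have h := moment_right hP hsupp (a := 0) (b := 1) le_rfl
    rw [hm, hsupp] at h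
    norm_num at h
    exact h
  have a21 : P (Set.Icc (2 / 3 : ℝ) (7 / 9)) = 2⁻¹ * 2⁻¹ := by
    have h := measure_right hP hsupp (a := 0) (b := 1 / 3) le_rfl
    rw [a1] at h
    norm_num only at h
    exact h
  have b21 : ∫ x in Set.Icc (2 / 3 : ℝ) (7 / 9), x ∂P = 13 / 72 := by
    have h := moment_right hP hsupp (a := 0) (b := 1 / 3) le_rfl
    rw [b1, a1] at h
    norm_num at h
    exact h
  have a22 : P (Set.Icc (8 / 9 : ℝ) 1) = 2⁻¹ * 2⁻¹ := by
    have h := measure_right hP hsupp (a := 2 / 3) (b := 1) (by norm_num)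
    rw [a2] at h
    norm_num only at h
    exact h
  have b22 : ∫ x in Set.Icc (8 / 9 : ℝ) 1, x ∂P = 17 / 72 := by
    have h := moment_right hP hsupp (a := 2 / 3) (b := 1) (by norm_num)
    rw [b2, a2] at h
    norm_num at h
    exact h
  refine ⟨?_, ?_, ?_, ?_, ?_, ?_, ?_⟩
  · rw [measure_union _ measurableSet_Icc, measure_union _ measurableSet_Icc, a1, a21, a22,
      add_assoc, ← mul_add, ENNReal.inv_two_add_inv_two, mul_one, ENNReal.inv_two_add_inv_two]
    · refine Set.disjoint_left.2 ?_
      rintro x ⟨-, h⟩ ⟨h', -⟩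
      linarith
    · refine Set.disjoint_left.2 ?_
      rintro x (⟨-, h⟩ | ⟨-, h⟩) ⟨h', -⟩ <;> linarith
  · rw [a1, b1]; norm_num
  · rw [a21, b21]; norm_num
  · rw [a22, b22]; norm_num
  all_goals
    rintro x ⟨h0, h1⟩
    refine ⟨⟨_, by simp, rfl⟩, ?_⟩
    rintro _ ⟨b, hb, rfl⟩
    simp only [Set.mem_insert_iff, Set.mem_singleton_iff] at hb
    rcases hb with rfl | rfl | rfl <;> dsimp only <;>
      first
      | exact le_rfl
      | (rw [abs_le]
         constructor <;>
           first
           | linarith [le_abs_self (x - 1 / 6), neg_abs_le (x - 1 / 6)]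
           | linarith [le_abs_self (x - 13 / 18), neg_abs_le (x - 13 / 18)]
           | linarith [le_abs_self (x - 17 / 18), neg_abs_le (x - 17 / 18)])
end

section
/- (Example 4.4) Let r₁ = 1/4, r₂ = 1/2, p₁ = 1/4, p₂ = 3/4, so S₁(x) = x/4 and S₂(x) = x/2 + 1/2, and let P be a Borel probability measure on ℝ satisfying P = (1/4)·(P∘S₁⁻¹) + (3/4)·(P∘S₂⁻¹) with P([0,1]) = 1. Then: (a) E(X) = ∫ x dP(x) = 2/3; and (b) the set α = {1/6, 7/12, 11/12} together with the cells J₁ = [0, 1/4], J₂₁ = [1/2, 5/8], J₂₂ = [3/4, 1] forms a centroidal Voronoi tessellation with three means, i.e., P(J₁ ∪ J₂₁ ∪ J₂₂) = 1, the centroids satisfy (1/P(J₁)) ∫_{J₁} x dP(x) = 1/6, (1/P(J₂₁)) ∫_{J₂₁} x dP(x) = 7/12, (1/P(J₂₂)) ∫_{J₂₂} x dP(x) = 11/12, and every point of each cell attains its minimum distance to α at the corresponding generator. -/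
/-!
Write `m A = P A` and `M A = ∫_A x dP`. Pulling the self-similarity identity back through
`S₁` and `S₂` gives, for `B = S₁⁻¹ A` and `C = S₂⁻¹ A` (only their traces on `[0, 1]` matter),
`m A = m B / 4 + 3 m C / 4` and `M A = M B / 16 + 3 (M C + m C) / 8`; this is `moments_step`.
Taking `A = [0, 1]` makes both preimages `[0, 1]`, so `M [0, 1] = 2 / 3`.  Each of the cells, and
the auxiliary interval `J₂ = [1/2, 1]`, has one empty preimage, the other being `[0, 1]`, `J₁` or
`J₂`, so all their masses and first moments follow.  The cells are disjoint and their masses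
`1/4`, `3/16`, `9/16` add up to one.
-/

open MeasureTheory

theorem ae_mem_unit (P : Measure ℝ) [IsProbabilityMeasure P]
    (hsupp : P (Set.Icc (0 : ℝ) 1) = 1) : ∀ᵐ x ∂P, x ∈ Set.Icc (0 : ℝ) 1 :=
  (prob_compl_eq_zero_iff measurableSet_Icc).2 hsupp

theorem integrable_id_of_unit (P : Measure ℝ) [IsProbabilityMeasure P]
    (hsupp : P (Set.Icc (0 : ℝ) 1) = 1) : Integrable (fun x : ℝ => x) P := by
  refine Integrable.of_bound measurable_id.aestronglyMeasurable 1 ?_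
  filter_upwards [ae_mem_unit P hsupp] with x hx
  rw [Real.norm_eq_abs, abs_le]
  constructor <;> linarith [hx.1, hx.2]

theorem integral_selfSimilar (P : Measure ℝ)
    (hP : P = (4⁻¹ : ENNReal) • P.map (fun x : ℝ => x / 4) +
              (3 / 4 : ENNReal) • P.map (fun x : ℝ => x / 2 + 1 / 2))
    (g : ℝ → ℝ) (hgm : Measurable g) (hg : Integrable g P) :
    ∫ x, g x ∂P = 1 / 4 * ∫ x, g (x / 4) ∂P + 3 / 4 * ∫ x, g (x / 2 + 1 / 2) ∂P := by
  have hg' := hg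
  rw [hP, integrable_add_measure] at hg'
  calc ∫ x, g x ∂P = ∫ x, g x ∂((4⁻¹ : ENNReal) • P.map (fun x : ℝ => x / 4) +
              (3 / 4 : ENNReal) • P.map (fun x : ℝ => x / 2 + 1 / 2)) := by rw [← hP]
    _ = _ := by
      rw [integral_add_measure hg'.1 hg'.2, integral_smul_measure, integral_smul_measure,
        integral_map (by fun_prop) hgm.aestronglyMeasurable,
        integral_map (by fun_prop) hgm.aestronglyMeasurable]
      norm_num

/-- Transfer of the mass and first moment of `A` to those of `B` and `C`, which need to agree
with the preimages of `A` under the two similarities only on `[0, 1]`, since `P` lives there. -/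
theorem moments_step (P : Measure ℝ) [IsProbabilityMeasure P]
    (hP : P = (4⁻¹ : ENNReal) • P.map (fun x : ℝ => x / 4) +
              (3 / 4 : ENNReal) • P.map (fun x : ℝ => x / 2 + 1 / 2))
    (hsupp : P (Set.Icc (0 : ℝ) 1) = 1) {A B C : Set ℝ}
    (hA : MeasurableSet A) (hB : MeasurableSet B) (hC : MeasurableSet C)
    (hAB : ∀ x ∈ Set.Icc (0 : ℝ) 1, x / 4 ∈ A ↔ x ∈ B)
    (hAC : ∀ x ∈ Set.Icc (0 : ℝ) 1, x / 2 + 1 / 2 ∈ A ↔ x ∈ C) :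
    P.real A = 1 / 4 * P.real B + 3 / 4 * P.real C ∧
    ∫ x in A, x ∂P = 1 / 16 * ∫ x in B, x ∂P + 3 / 8 * (∫ x in C, x ∂P + P.real C) := by
  have hid := integrable_id_of_unit P hsupp
  have hae := ae_mem_unit P hsupp
  have transfer (f : ℝ → ℝ) (hfm : Measurable f) (hf : Integrable f P) :
      ∫ x in A, f x ∂P = 1 / 4 * ∫ x in B, f (x / 4) ∂P
        + 3 / 4 * ∫ x in C, f (x / 2 + 1 / 2) ∂P := by
    rw [← integral_indicator hA, ← integral_indicator hB, ← integral_indicator hC,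
      integral_selfSimilar P hP _ (hfm.indicator hA) (hf.indicator hA)]
    congr 2
    · refine integral_congr_ae ?_
      filter_upwards [hae] with x hx
      have := hAB x hx
      simp only [Set.indicator]
      split_ifs <;> tauto
    · refine integral_congr_ae ?_
      filter_upwards [hae] with x hx
      have := hAC x hx
      simp only [Set.indicator]
      split_ifs <;> tauto
  constructor
  · simpa using transfer (fun _ => 1) measurable_const (integrable_const _)
  · rw [transfer (fun x => x) measurable_id hid, integral_div,
      integral_add (hid.integrableOn.div_const 2) (integrable_const _), integral_div]
    simp
    ring

theorem stmt_19 (P : Measure ℝ) [IsProbabilityMeasure P]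
    (hP : P = (4⁻¹ : ENNReal) • P.map (fun x : ℝ => x / 4) +
              (3 / 4 : ENNReal) • P.map (fun x : ℝ => x / 2 + 1 / 2))
    (hsupp : P (Set.Icc (0 : ℝ) 1) = 1) :
    (∫ x, x ∂P) = 2 / 3 ∧
    P (Set.Icc (0 : ℝ) (1 / 4) ∪ Set.Icc (1 / 2) (5 / 8) ∪ Set.Icc (3 / 4) 1) = 1 ∧
    (P (Set.Icc (0 : ℝ) (1 / 4))).toReal⁻¹ *
        (∫ x in Set.Icc (0 : ℝ) (1 / 4), x ∂P) = 1 / 6 ∧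
    (P (Set.Icc (1 / 2 : ℝ) (5 / 8))).toReal⁻¹ *
        (∫ x in Set.Icc (1 / 2 : ℝ) (5 / 8), x ∂P) = 7 / 12 ∧
    (P (Set.Icc (3 / 4 : ℝ) 1)).toReal⁻¹ *
        (∫ x in Set.Icc (3 / 4 : ℝ) 1, x ∂P) = 11 / 12 ∧
    (∀ x ∈ Set.Icc (0 : ℝ) (1 / 4),
      IsLeast ((fun b => |x - b|) '' ({1 / 6, 7 / 12, 11 / 12} : Set ℝ)) |x - 1 / 6|) ∧
    (∀ x ∈ Set.Icc (1 / 2 : ℝ) (5 / 8),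
      IsLeast ((fun b => |x - b|) '' ({1 / 6, 7 / 12, 11 / 12} : Set ℝ)) |x - 7 / 12|) ∧
    (∀ x ∈ Set.Icc (3 / 4 : ℝ) 1,
      IsLeast ((fun b => |x - b|) '' ({1 / 6, 7 / 12, 11 / 12} : Set ℝ)) |x - 11 / 12|) := by
  have step := fun {A B C : Set ℝ} => moments_step P hP hsupp (A := A) (B := B) (C := C)
  have hK : P.real (Set.Icc (0 : ℝ) 1) = 1 := by simp [measureReal_def, hsupp]
  have hM : ∫ x, x ∂P = ∫ x in Set.Icc (0 : ℝ) 1, x ∂P := by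
    rw [Measure.restrict_eq_self_of_ae_mem (ae_mem_unit P hsupp)]
  obtain ⟨-, hMK⟩ := step (A := Set.Icc 0 1) (B := Set.Icc 0 1) (C := Set.Icc 0 1)
    measurableSet_Icc measurableSet_Icc measurableSet_Icc
    (by grind)
    (by grind)
  obtain ⟨m1, M1⟩ := step (A := Set.Icc 0 (1 / 4)) (B := Set.Icc 0 1) (C := ∅)
    measurableSet_Icc measurableSet_Icc MeasurableSet.empty
    (by grind)
    (by grind)
  obtain ⟨m2, M2⟩ := step (A := Set.Icc (1 / 2) 1) (B := ∅) (C := Set.Icc 0 1)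
    measurableSet_Icc MeasurableSet.empty measurableSet_Icc
    (by grind)
    (by grind)
  obtain ⟨m21, M21⟩ := step (A := Set.Icc (1 / 2) (5 / 8)) (B := ∅) (C := Set.Icc 0 (1 / 4))
    measurableSet_Icc MeasurableSet.empty measurableSet_Icc
    (by grind)
    (by grind)
  obtain ⟨m22, M22⟩ := step (A := Set.Icc (3 / 4) 1) (B := ∅) (C := Set.Icc (1 / 2) 1)
    measurableSet_Icc MeasurableSet.empty measurableSet_Icc
    (by grind)
    (by grind)
  simp only [measureReal_empty, Measure.restrict_empty, integral_zero_measure]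
    at m1 M1 m2 M2 m21 M21 m22 M22
  have eK : ∫ x in Set.Icc (0 : ℝ) 1, x ∂P = 2 / 3 := by linarith
  have em1 : P.real (Set.Icc (0 : ℝ) (1 / 4)) = 1 / 4 := by linarith
  have em21 : P.real (Set.Icc (1 / 2 : ℝ) (5 / 8)) = 3 / 16 := by linarith
  have em22 : P.real (Set.Icc (3 / 4 : ℝ) 1) = 9 / 16 := by linarith
  have eM1 : ∫ x in Set.Icc (0 : ℝ) (1 / 4), x ∂P = 1 / 24 := by linarith
  have eM21 : ∫ x in Set.Icc (1 / 2 : ℝ) (5 / 8), x ∂P = 7 / 64 := by linarith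
  have eM22 : ∫ x in Set.Icc (3 / 4 : ℝ) 1, x ∂P = 33 / 64 := by linarith
  refine ⟨hM.trans eK, ?_, ?_, ?_, ?_, ?_, ?_, ?_⟩
  · have hU : P.real (Set.Icc (0 : ℝ) (1 / 4) ∪ Set.Icc (1 / 2) (5 / 8) ∪ Set.Icc (3 / 4) 1)
        = 1 := by
      rw [measureReal_union _ measurableSet_Icc, measureReal_union _ measurableSet_Icc,
        em1, em21, em22]
      · norm_num
      · rw [Set.disjoint_left]
        rintro x ⟨_, _⟩ ⟨_, _⟩
        linarith
      · rw [Set.disjoint_left]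
        rintro x (⟨_, _⟩ | ⟨_, _⟩) ⟨_, _⟩ <;> linarith
    rwa [measureReal_def, ENNReal.toReal_eq_one_iff] at hU
  · rw [← measureReal_def, em1, eM1]; norm_num
  · rw [← measureReal_def, em21, eM21]; norm_num
  · rw [← measureReal_def, em22, eM22]; norm_num
  · rintro x ⟨_, _⟩
    refine ⟨⟨1 / 6, by simp, rfl⟩, ?_⟩
    rintro _ ⟨b, hb, rfl⟩
    simp only [Set.mem_insert_iff, Set.mem_singleton_iff] at hb
    rcases hb with rfl | rfl | rfl <;> dsimp only <;> grind
  · rintro x ⟨_, _⟩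
    refine ⟨⟨7 / 12, by simp, rfl⟩, ?_⟩
    rintro _ ⟨b, hb, rfl⟩
    simp only [Set.mem_insert_iff, Set.mem_singleton_iff] at hb
    rcases hb with rfl | rfl | rfl <;> dsimp only <;> grind
  · rintro x ⟨_, _⟩
    refine ⟨⟨11 / 12, by simp, rfl⟩, ?_⟩
    rintro _ ⟨b, hb, rfl⟩
    simp only [Set.mem_insert_iff, Set.mem_singleton_iff] at hb
    rcases hb with rfl | rfl | rfl <;> dsimp only <;> grind
end
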